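/- Let 0<p<1 and let r_{n,k} be the root-cluster weights for random recursive trees (φ(δ)=1 for all δ). Then for every integer k ≥ 1, the normalized k-th moment of the root-cluster size satisfies lim_{n→∞} m_k(n)/n^{pk} = k!/Γ(pk+1); that is, the root-cluster size divided by n^p converges in moments to the Mittag-Leffler distribution with parameter p. -/

import Mathlib

open Finset Filter Asymptotics

/-- The root-cluster weight recursion. -/
noncomputable def clusterRec (p : ℝ) (φ : ℕ → ℝ) (r : ℕ → ℕ → ℝ) (b : ℕ → ℝ) : Prop :=
  (∀ m, b m = ∑ k ∈ Finset.Icc 1 m, r m k) ∧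
  ∀ n k : ℕ, 1 ≤ n → 1 ≤ k →
    r n k =
      ∑ δ ∈ Finset.range n, ∑ s ∈ (Finset.range (δ + 1)).attach,
        (δ.choose s.1 : ℝ) * (φ δ / (δ.factorial : ℝ)) *
          ∑ f ∈ (Finset.Nat.antidiagonalTuple δ (n - 1)).filter (fun f => ∀ i, 1 ≤ f i),
            (((n - 1).factorial : ℝ) / ∏ i, ((f i).factorial : ℝ)) *
              ∑ g ∈ (Finset.Nat.antidiagonalTuple s.1 (k - 1)).filter (fun g => ∀ i, 1 ≤ g i),
                p ^ s.1 * (1 - p) ^ (δ - s.1) *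
                  (∏ i : Fin s.1,
                    r (f (Fin.castLE (Nat.lt_succ_iff.mp (Finset.mem_range.mp s.2)) i)) (g i)) *
                  ∏ j ∈ Finset.univ.filter (fun j : Fin δ => s.1 ≤ (j : ℕ)), b (f j)

/-- Partial Bell polynomials. -/
noncomputable def bellPartial (k j : ℕ) (x : ℕ → ℝ) : ℝ :=
  ∑ m ∈ (Fintype.piFinset (fun _ : Fin (k - j + 1) => Finset.range (k + 1))).filter
      (fun m : Fin (k - j + 1) → ℕ => (∑ i : Fin (k - j + 1), ((i : ℕ) + 1) * m i) = k ∧ (∑ i, m i) = j),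
    (k.factorial : ℝ) *
      ∏ i : Fin (k - j + 1), x ((i : ℕ) + 1) ^ m i /
        (((m i).factorial : ℝ) * (((i : ℕ) + 1).factorial : ℝ) ^ m i)

/-!
The recursion says that the generating function `R(z, v) = ∑ r_{n,k} vᵏ zⁿ / n!` satisfies
`R' = v exp(p R + (1 - p) B)` with `B(z) = R(z, 1)`, where primes are derivatives in `z`. Hence
`R'' = (p R' + (1 - p) B') R'`, with `R'(0, v) = v`. At `v = 1` this gives `B' = (1 - z)⁻¹`, and then
a Bernoulli equation for `R'`, whose solution at `v = (1 - x)⁻¹` is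
`R' = (1 - z)⁻¹ / (1 - x (1 - z)^(-p))`. Comparing the coefficients of `xᵏ` and `zⁿ` shows that, in
a tree with `n + 1` vertices, the `k`-th rising factorial moment of the root-cluster size is exactly
`k!` times the coefficient of `zⁿ` in `(1 - z)^(-(p k + 1))`, which by Euler's limit formula for
`Γ` is asymptotic to `k! n^(p k) / Γ(p k + 1)`. A rising factorial differs from the corresponding
power by lower powers, whose moments are of smaller order, so the ordinary moments have the same
limits.
-/

open scoped Polynomial PowerSeries Topology

section PositiveTuples

/-- The compositions of `n` into `s` parts, as functions on `Fin s`: the index set of the inner sums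
in `clusterRec`. -/
abbrev positiveTuples (s n : ℕ) : Finset (Fin s → ℕ) :=
  (Finset.Nat.antidiagonalTuple s n).filter fun f => ∀ i, 1 ≤ f i

theorem sum_eq_of_mem_positiveTuples {s n : ℕ} {f : Fin s → ℕ} (hf : f ∈ positiveTuples s n) :
    ∑ i, f i = n :=
  Finset.Nat.mem_antidiagonalTuple.mp (Finset.mem_filter.mp hf).1

theorem one_le_of_mem_positiveTuples {s n : ℕ} {f : Fin s → ℕ} (hf : f ∈ positiveTuples s n)
    (i : Fin s) : 1 ≤ f i :=
  (Finset.mem_filter.mp hf).2 i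

variable {R : Type*} [CommSemiring R]

theorem coeff_prod_eq_sum_antidiagonalTuple {s : ℕ} (F : Fin s → R⟦X⟧) (n : ℕ) :
    PowerSeries.coeff n (∏ i, F i) =
      ∑ f ∈ Finset.Nat.antidiagonalTuple s n, ∏ i, PowerSeries.coeff (f i) (F i) := by
  rw [PowerSeries.coeff_prod]
  refine Finset.sum_equiv Finsupp.equivFunOnFinite (fun f => ?_) fun f _ => rfl
  simp [Finset.mem_finsuppAntidiag, Finset.Nat.mem_antidiagonalTuple]

theorem coeff_prod_eq_sum_positiveTuples {s : ℕ} {F : Fin s → R⟦X⟧}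
    (hF : ∀ i, PowerSeries.constantCoeff (F i) = 0) (n : ℕ) :
    PowerSeries.coeff n (∏ i, F i) =
      ∑ f ∈ positiveTuples s n, ∏ i, PowerSeries.coeff (f i) (F i) := by
  rw [coeff_prod_eq_sum_antidiagonalTuple]
  refine (Finset.sum_filter_of_ne fun f _ hne i => ?_).symm
  by_contra! hi
  refine hne (Finset.prod_eq_zero (Finset.mem_univ i) ?_)
  rw [Nat.lt_one_iff.mp hi, PowerSeries.coeff_zero_eq_constantCoeff_apply, hF]

theorem polynomial_coeff_prod_eq_sum_positiveTuples {s : ℕ} {P : Fin s → R[X]}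
    (hP : ∀ i, (P i).coeff 0 = 0) (k : ℕ) :
    (∏ i, P i).coeff k = ∑ g ∈ positiveTuples s k, ∏ i, (P i).coeff (g i) := by
  rw [← Polynomial.coeff_coe, ← Polynomial.coeToPowerSeries.ringHom_apply, map_prod,
    coeff_prod_eq_sum_positiveTuples (by simpa using hP)]
  simp only [Polynomial.coeToPowerSeries.ringHom_apply, Polynomial.coeff_coe]

variable {M : Type*} [CommMonoid M]

theorem prod_filter_le_val_add (s t : ℕ) (f : Fin (s + t) → M) :
    ∏ j ∈ {j : Fin (s + t) | s ≤ (j : ℕ)}, f j = ∏ i : Fin t, f (Fin.natAdd s i) := by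
  simp [Finset.prod_filter, Fin.prod_univ_add, Nat.not_le.mpr (Fin.is_lt _)]

theorem prod_ite_val_lt {δ s : ℕ} (h : s ≤ δ) (f g : Fin δ → M) :
    (∏ j : Fin δ, if (j : ℕ) < s then f j else g j) =
      (∏ i : Fin s, f (Fin.castLE h i)) * ∏ j ∈ {j : Fin δ | s ≤ (j : ℕ)}, g j := by
  obtain ⟨t, rfl⟩ := Nat.exists_eq_add_of_le h
  have hcast (i : Fin s) : Fin.castAdd t i = Fin.castLE h i := rfl
  simp [prod_filter_le_val_add, Fin.prod_univ_add, ← hcast]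

theorem pow_mul_pow_eq_prod_ite {δ s : ℕ} (h : s ≤ δ) (x y : M) :
    x ^ s * y ^ (δ - s) = ∏ j : Fin δ, if (j : ℕ) < s then x else y := by
  obtain ⟨t, rfl⟩ := Nat.exists_eq_add_of_le h
  simp [Fin.prod_univ_add]

end PositiveTuples

section ExponentialGeneratingFunction

variable {K : Type*} [Field K] {A : Type*} [CommRing A] [Algebra K A]

variable (K) in
/-- The exponential generating function `∑ f n zⁿ / n!` of a sequence in a `K`-algebra. -/
noncomputable def egf (f : ℕ → A) : A⟦X⟧ :=
  PowerSeries.mk fun n => (n.factorial : K)⁻¹ • f n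

theorem coeff_egf (f : ℕ → A) (n : ℕ) : PowerSeries.coeff n (egf K f) = (n.factorial : K)⁻¹ • f n :=
  PowerSeries.coeff_mk _ _

theorem constantCoeff_egf (f : ℕ → A) : PowerSeries.constantCoeff (egf K f) = f 0 := by
  simp [← PowerSeries.coeff_zero_eq_constantCoeff_apply, coeff_egf]

theorem map_egf {B : Type*} [CommRing B] [Algebra K B] (ψ : A →ₐ[K] B) (f : ℕ → A) :
    PowerSeries.map (ψ : A →+* B) (egf K f) = egf K fun n => ψ (f n) := by
  ext n
  simp [coeff_egf]

theorem derivative_egf [CharZero K] (f : ℕ → A) : d⁄dX A (egf K f) = egf K fun n => f (n + 1) := by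
  ext n
  have hfac : ((n + 1 : ℕ) : K) * ((n + 1).factorial : K)⁻¹ = (n.factorial : K)⁻¹ := by
    rw [Nat.factorial_succ, Nat.cast_mul, mul_inv,
      mul_inv_cancel_left₀ (Nat.cast_ne_zero.mpr n.succ_ne_zero)]
  rw [PowerSeries.coeff_derivative, coeff_egf, coeff_egf, ← hfac, mul_smul, mul_comm,
    ← Nat.cast_succ, Nat.cast_smul_eq_nsmul, nsmul_eq_mul]

theorem coeff_egf_pow_mul_egf_pow {f g : ℕ → A} (hf : f 0 = 0) (hg : g 0 = 0) {δ s : ℕ}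
    (h : s ≤ δ) (n : ℕ) :
    PowerSeries.coeff n (egf K f ^ s * egf K g ^ (δ - s)) =
      ∑ m ∈ positiveTuples δ n, (∏ i, ((m i).factorial : K)⁻¹) •
        ((∏ i : Fin s, f (m (Fin.castLE h i))) * ∏ j ∈ {j : Fin δ | s ≤ (j : ℕ)}, g (m j)) := by
  have hzero (j : Fin δ) :
      PowerSeries.constantCoeff (if (j : ℕ) < s then egf K f else egf K g) = 0 := by
    split_ifs <;> simp [constantCoeff_egf, hf, hg]
  have hcoeff (j : Fin δ) (m : ℕ) :
      PowerSeries.coeff m (if (j : ℕ) < s then egf K f else egf K g) =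
        (m.factorial : K)⁻¹ • if (j : ℕ) < s then f m else g m := by
    split_ifs <;> exact coeff_egf _ _
  rw [pow_mul_pow_eq_prod_ite h, coeff_prod_eq_sum_positiveTuples hzero]
  refine Finset.sum_congr rfl fun m _ => ?_
  simp only [hcoeff, Finset.prod_smul]
  rw [prod_ite_val_lt h (fun j => f (m j)) fun j => g (m j)]

end ExponentialGeneratingFunction

section PowerSeriesLemmas

variable {R : Type*} [CommRing R]

theorem coeff_subst_eq_sum_range {A : Type*} [CommRing A] [Algebra R A] (f : R⟦X⟧) {g : A⟦X⟧}
    (hg : PowerSeries.constantCoeff g = 0) (n : ℕ) :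
    PowerSeries.coeff n (f.subst g) =
      ∑ δ ∈ Finset.range (n + 1), PowerSeries.coeff δ f • PowerSeries.coeff n (g ^ δ) := by
  rw [PowerSeries.coeff_subst' (PowerSeries.HasSubst.of_constantCoeff_zero' hg)]
  refine finsum_eq_sum_of_support_subset _ fun δ hδ => ?_
  by_contra hlt
  have hnδ : (n : ℕ∞) < δ := by simpa using hlt
  have hvanish : PowerSeries.coeff n (g ^ δ) = 0 := PowerSeries.coeff_of_lt_order _
    (hnδ.trans_le (PowerSeries.le_order_pow_of_constantCoeff_eq_zero δ hg))
  exact hδ (by simp only [hvanish, smul_zero])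

theorem eq_zero_of_derivative_eq_mul [IsAddTorsionFree R] {F H : R⟦X⟧}
    (hF : d⁄dX R F = H * F) (h0 : PowerSeries.constantCoeff F = 0) : F = 0 := by
  ext n
  induction n using Nat.strong_induction_on with
  | _ n ih =>
  cases n with
  | zero => simpa using h0
  | succ n =>
    have hcoeff : PowerSeries.coeff (n + 1) F * ((n : R) + 1) = 0 := by
      rw [← PowerSeries.coeff_derivative, hF, PowerSeries.coeff_mul]
      refine Finset.sum_eq_zero fun ij hij => ?_
      have hlt : ij.2 < n + 1 :=
        Nat.lt_succ_of_le (Finset.HasAntidiagonal.antidiagonal.snd_le hij)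
      rw [ih ij.2 hlt, map_zero, mul_zero]
    rw [map_zero, ← nsmul_right_inj n.succ_ne_zero, nsmul_zero, nsmul_eq_mul, mul_comm]
    exact_mod_cast hcoeff

theorem coeff_coeff_of_mul_one_sub_C_X_mul {T : R⟦X⟧⟦X⟧} {Y Z : R⟦X⟧}
    (h : T * (1 - PowerSeries.C PowerSeries.X * PowerSeries.map PowerSeries.C Y) =
      PowerSeries.map PowerSeries.C Z) (k n : ℕ) :
    PowerSeries.coeff k (PowerSeries.coeff n T) = PowerSeries.coeff n (Z * Y ^ k) := by
  have hT : T = PowerSeries.map PowerSeries.C Z +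
      PowerSeries.C PowerSeries.X * (PowerSeries.map PowerSeries.C Y * T) := by
    linear_combination h
  induction k generalizing n with
  | zero => rw [hT]; simp
  | succ k ih =>
    rw [hT, map_add, PowerSeries.coeff_C_mul, map_add, PowerSeries.coeff_succ_X_mul,
      PowerSeries.coeff_map, PowerSeries.coeff_C, if_neg k.succ_ne_zero, zero_add, pow_succ',
      mul_left_comm, PowerSeries.coeff_mul, PowerSeries.coeff_mul, map_sum]
    refine Finset.sum_congr rfl fun ij _ => ?_
    rw [PowerSeries.coeff_map, PowerSeries.coeff_C_mul, ih]

end PowerSeriesLemmas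

section InvOneSubRpow

variable {R : Type*} [CommRing R] [BinomialRing R]

/-- The negative binomial series `(1 - z)^(-q)`, for an arbitrary exponent `q` in a binomial
ring. -/
noncomputable def invOneSubRpow (q : R) : R⟦X⟧ :=
  PowerSeries.mk (Ring.multichoose q)

theorem coeff_invOneSubRpow (q : R) (n : ℕ) :
    PowerSeries.coeff n (invOneSubRpow q) = Ring.multichoose q n :=
  PowerSeries.coeff_mk _ _

theorem constantCoeff_invOneSubRpow (q : R) :
    PowerSeries.constantCoeff (invOneSubRpow q) = 1 := by
  rw [← PowerSeries.coeff_zero_eq_constantCoeff_apply, coeff_invOneSubRpow,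
    Ring.multichoose_zero_right]

theorem map_invOneSubRpow {S : Type*} [CommRing S] [BinomialRing S] (ψ : R →+* S) (q : R) :
    PowerSeries.map ψ (invOneSubRpow q) = invOneSubRpow (ψ q) := by
  ext n
  rw [PowerSeries.coeff_map, coeff_invOneSubRpow, coeff_invOneSubRpow, Ring.map_multichoose]

theorem invOneSubRpow_eq_rescale (q : R) :
    invOneSubRpow q = PowerSeries.rescale (-1) (PowerSeries.binomialSeries R (-q)) := by
  ext n
  rw [coeff_invOneSubRpow, PowerSeries.coeff_rescale, PowerSeries.binomialSeries_coeff,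
    Ring.choose_neg', smul_eq_mul, mul_one, Units.smul_def, zsmul_eq_mul,
    Int.cast_negOnePow_natCast, ← mul_assoc, ← mul_pow, neg_one_mul, neg_neg, one_pow, one_mul]

theorem invOneSubRpow_add (q s : R) :
    invOneSubRpow (q + s) = invOneSubRpow q * invOneSubRpow s := by
  simp only [invOneSubRpow_eq_rescale, neg_add, PowerSeries.binomialSeries_add, map_mul]

theorem invOneSubRpow_zero : invOneSubRpow (0 : R) = 1 := by
  rw [invOneSubRpow_eq_rescale, neg_zero, PowerSeries.binomialSeries_zero, map_one]

theorem invOneSubRpow_pow (q : R) (k : ℕ) : invOneSubRpow q ^ k = invOneSubRpow (k * q) := by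
  induction k with
  | zero => simp [invOneSubRpow_zero]
  | succ k ih => rw [pow_succ, ih, ← invOneSubRpow_add, Nat.cast_succ, add_one_mul]

theorem invOneSubRpow_one_mul_one_sub_X :
    invOneSubRpow (1 : R) * (1 - PowerSeries.X) = 1 := by
  have hone : invOneSubRpow (1 : R) = PowerSeries.mk 1 := by
    ext n
    simp [coeff_invOneSubRpow]
  rw [hone, PowerSeries.mk_one_mul_one_sub_eq_one]

theorem multichoose_succ_mul (q : R) (n : ℕ) :
    Ring.multichoose q (n + 1) * (n + 1) = q * Ring.multichoose (q + 1) n := by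
  have := BinomialRing.toIsAddTorsionFree (R := R)
  rw [← nsmul_right_inj n.factorial_ne_zero]
  calc n.factorial • (Ring.multichoose q (n + 1) * (n + 1))
      = (n + 1).factorial • Ring.multichoose q (n + 1) := by
        simp only [nsmul_eq_mul, Nat.factorial_succ]; push_cast; ring
    _ = q * (ascPochhammer ℕ n).smeval (q + 1) := by
        rw [Ring.factorial_nsmul_multichoose_eq_ascPochhammer, ascPochhammer_succ_left,
          Polynomial.smeval_X_mul, Polynomial.smeval_comp]
        simp
    _ = n.factorial • (q * Ring.multichoose (q + 1) n) := by
        rw [← Ring.factorial_nsmul_multichoose_eq_ascPochhammer, mul_smul_comm]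

theorem derivative_invOneSubRpow (q : R) :
    d⁄dX R (invOneSubRpow q) = PowerSeries.C q * (invOneSubRpow q * invOneSubRpow 1) := by
  ext n
  rw [← invOneSubRpow_add, PowerSeries.coeff_derivative, PowerSeries.coeff_C_mul,
    coeff_invOneSubRpow, coeff_invOneSubRpow, multichoose_succ_mul]

/- The substitution `T = 1 / U` turns this Bernoulli equation into a linear one, with solution
`U = (1 - z) (1 - x (1 - z)^(-p))`. -/
theorem bernoulli_mul_one_sub_eq {p x : R} {T : R⟦X⟧}
    (hT : d⁄dX R T =
      (PowerSeries.C p * T + PowerSeries.C (1 - p) * invOneSubRpow 1) * T)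
    (h0 : PowerSeries.constantCoeff T * (1 - x) = 1) :
    T * (1 - PowerSeries.C x * invOneSubRpow p) = invOneSubRpow 1 := by
  have := BinomialRing.toIsAddTorsionFree (R := R)
  rw [← sub_eq_zero]
  refine eq_zero_of_derivative_eq_mul (H := PowerSeries.C p * T + invOneSubRpow 1) ?_ ?_
  · simp only [map_sub, Derivation.leibniz, hT, derivative_invOneSubRpow, PowerSeries.derivative_C,
      map_one, smul_eq_mul, Derivation.map_one_eq_zero]
    ring
  · simp [constantCoeff_invOneSubRpow, h0]

end InvOneSubRpow

section ClusterPolynomial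

/-- The generating polynomial `∑ r_{n,k} vᵏ` of the root-cluster weights of trees with `n`
vertices. -/
noncomputable def clusterPoly (r : ℕ → ℕ → ℝ) (n : ℕ) : ℝ[X] :=
  ∑ k ∈ Finset.Icc 1 n, Polynomial.monomial k (r n k)

theorem coeff_clusterPoly (r : ℕ → ℕ → ℝ) (n k : ℕ) :
    (clusterPoly r n).coeff k = if k ∈ Finset.Icc 1 n then r n k else 0 := by
  simp only [clusterPoly, Polynomial.finsetSum_coeff, Polynomial.coeff_monomial,
    Finset.sum_ite_eq']

theorem clusterPoly_zero (r : ℕ → ℕ → ℝ) : clusterPoly r 0 = 0 := rfl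

variable {p : ℝ} {φ : ℕ → ℝ} {r : ℕ → ℕ → ℝ} {b : ℕ → ℝ}

theorem clusterRec.eval_one_clusterPoly (hrec : clusterRec p φ r b) (n : ℕ) :
    (clusterPoly r n).eval 1 = b n := by
  simp [clusterPoly, Polynomial.eval_finsetSum, hrec.1]

theorem clusterRec.eq_zero_of_lt (hrec : clusterRec p φ r b) {n k : ℕ} (hn : 1 ≤ n) (hk : n < k) :
    r n k = 0 := by
  induction n using Nat.strong_induction_on generalizing k with
  | _ n ih =>
  rw [hrec.2 n k hn (hn.trans hk.le)]
  refine Finset.sum_eq_zero fun δ _ => Finset.sum_eq_zero fun s _ => ?_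
  refine mul_eq_zero_of_right _ (Finset.sum_eq_zero fun f hf => ?_)
  refine mul_eq_zero_of_right _ (Finset.sum_eq_zero fun g hg => ?_)
  refine mul_eq_zero_of_left (mul_eq_zero_of_right _ ?_) _
  have hfsum : ∑ i, f i = n - 1 := sum_eq_of_mem_positiveTuples hf
  have hgsum : ∑ i, g i = k - 1 := sum_eq_of_mem_positiveTuples hg
  have hsδ : s.1 ≤ δ := Nat.lt_succ_iff.mp (Finset.mem_range.mp s.2)
  have hle : ∑ i : Fin s.1, f (Fin.castLE hsδ i) ≤ ∑ j, f j :=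
    Finset.sum_map Finset.univ (Fin.castLEEmb hsδ) f ▸
      Finset.sum_le_sum_of_subset (Finset.subset_univ _)
  obtain ⟨i, -, hi⟩ : ∃ i ∈ Finset.univ, f (Fin.castLE hsδ i) < g i :=
    Finset.exists_lt_of_sum_lt (by omega)
  have hlt : f (Fin.castLE hsδ i) < n := by
    have := Finset.single_le_sum_of_canonicallyOrdered (f := f) (Finset.mem_univ (Fin.castLE hsδ i))
    omega
  exact Finset.prod_eq_zero (Finset.mem_univ i)
    (ih _ hlt (one_le_of_mem_positiveTuples hf _) hi)

theorem clusterRec.coeff_clusterPoly (hrec : clusterRec p φ r b) {n k : ℕ} (hn : 1 ≤ n)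
    (hk : 1 ≤ k) : (clusterPoly r n).coeff k = r n k := by
  rw [_root_.coeff_clusterPoly]
  refine ite_eq_left_iff.mpr fun hmem => (hrec.eq_zero_of_lt hn ?_).symm
  simpa [hk] using hmem

theorem clusterRec.coeff_prod_clusterPoly (hrec : clusterRec p φ r b) {s : ℕ} {m : Fin s → ℕ}
    (hm : ∀ i, 1 ≤ m i) (k : ℕ) :
    (∏ i, clusterPoly r (m i)).coeff k = ∑ g ∈ positiveTuples s k, ∏ i, r (m i) (g i) := by
  rw [polynomial_coeff_prod_eq_sum_positiveTuples fun i => by simp [_root_.coeff_clusterPoly]]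
  refine Finset.sum_congr rfl fun g hg => Finset.prod_congr rfl fun i _ => ?_
  exact hrec.coeff_clusterPoly (hm i) (one_le_of_mem_positiveTuples hg i)

theorem clusterRec.coeff_coeff_egf_pow_mul_egf_pow (hrec : clusterRec p φ r b) {δ s : ℕ}
    (h : s ≤ δ) (n k : ℕ) :
    (PowerSeries.coeff n (egf ℝ (clusterPoly r) ^ s *
        egf ℝ (fun m => Polynomial.C (b m)) ^ (δ - s))).coeff k =
      ∑ f ∈ positiveTuples δ n, (∏ i, ((f i).factorial : ℝ)⁻¹) * ∑ g ∈ positiveTuples s k,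
        (∏ i : Fin s, r (f (Fin.castLE h i)) (g i)) *
          ∏ j ∈ {j : Fin δ | s ≤ (j : ℕ)}, b (f j) := by
  have hb : Polynomial.C (b 0) = 0 := by simp [hrec.1]
  rw [coeff_egf_pow_mul_egf_pow (clusterPoly_zero r) hb h, Polynomial.finsetSum_coeff]
  refine Finset.sum_congr rfl fun f hf => ?_
  rw [← map_prod, Polynomial.coeff_smul, Polynomial.coeff_mul_C, smul_eq_mul,
    hrec.coeff_prod_clusterPoly (fun i => one_le_of_mem_positiveTuples hf _), Finset.sum_mul]

end ClusterPolynomial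

section ClusterSeries

variable {A : Type*} [CommRing A] [Algebra ℝ A]

/-- The exponential generating function `∑ r_{n,k} aᵏ zⁿ / n!` of the root-cluster weights, in which
`a` marks the size of the root cluster. At `a = 1` it is the generating function of the tree weights
`b`; at `a = Polynomial.X` it is universal. -/
noncomputable def clusterSeries (r : ℕ → ℕ → ℝ) (a : A) : A⟦X⟧ :=
  egf ℝ fun n => Polynomial.aeval a (clusterPoly r n)

theorem map_aeval_clusterSeries (r : ℕ → ℕ → ℝ) (a : A) (q : ℝ[X]) :
    PowerSeries.map (Polynomial.aeval (R := ℝ) a : ℝ[X] →+* A) (clusterSeries r q) =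
      clusterSeries r (Polynomial.aeval a q) := by
  simp [clusterSeries, map_egf, Polynomial.aeval_algHom_apply]

theorem constantCoeff_clusterSeries (r : ℕ → ℕ → ℝ) (a : A) :
    PowerSeries.constantCoeff (clusterSeries r a) = 0 := by
  simp [clusterSeries, constantCoeff_egf, clusterPoly_zero]

variable {p : ℝ} {φ : ℕ → ℝ} {r : ℕ → ℕ → ℝ} {b : ℕ → ℝ}

theorem clusterRec.clusterSeries_one (hrec : clusterRec p φ r b) :
    clusterSeries r (1 : A) = egf ℝ fun n => algebraMap ℝ A (b n) := by
  simp only [clusterSeries, ← hrec.eval_one_clusterPoly,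
    ← Polynomial.aeval_algebraMap_apply_eq_algebraMap_eval, map_one]

variable (p r) in
/-- The generating function `p R(z, a) + (1 - p) B(z)` of a coloured subtree attached to the root,
whose root keeps the colour of its parent with probability `p`. -/
noncomputable def subtreeSeries (a : A) : A⟦X⟧ :=
  PowerSeries.C (algebraMap ℝ A p) * clusterSeries r a +
    PowerSeries.C (algebraMap ℝ A (1 - p)) * clusterSeries r 1

theorem constantCoeff_subtreeSeries (a : A) :
    PowerSeries.constantCoeff (subtreeSeries p r a) = 0 := by
  simp [subtreeSeries, constantCoeff_clusterSeries]

theorem coeff_subtreeSeries_pow (a : A) (δ n : ℕ) :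
    PowerSeries.coeff n (subtreeSeries p r a ^ δ) =
      ∑ s ∈ Finset.range (δ + 1), ((δ.choose s : ℝ) * (p ^ s * (1 - p) ^ (δ - s))) •
        PowerSeries.coeff n (clusterSeries r a ^ s * clusterSeries r 1 ^ (δ - s)) := by
  rw [subtreeSeries, add_pow, map_sum]
  refine Finset.sum_congr rfl fun s _ => ?_
  rw [Algebra.smul_def, ← PowerSeries.coeff_C_mul]
  congr 1
  simp only [mul_pow, map_mul, map_pow, map_natCast]
  ring

theorem clusterRec.derivative_clusterSeries_X (hrec : clusterRec p φ r b) :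
    d⁄dX ℝ[X] (clusterSeries r Polynomial.X) =
      PowerSeries.C Polynomial.X * (egf ℝ fun δ => Polynomial.C (φ δ)).subst
        (subtreeSeries p r (Polynomial.X : ℝ[X])) := by
  have hR : clusterSeries r (Polynomial.X : ℝ[X]) = egf ℝ (clusterPoly r) := by
    simp only [clusterSeries, Polynomial.aeval_X_left_apply]
  have hB : clusterSeries r (1 : ℝ[X]) = egf ℝ fun n => Polynomial.C (b n) := hrec.clusterSeries_one
  ext n k
  rw [PowerSeries.coeff_C_mul, coeff_subst_eq_sum_range _ (constantCoeff_subtreeSeries _)]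
  cases k with
  | zero => simp [hR, derivative_egf, coeff_egf, _root_.coeff_clusterPoly]
  | succ k =>
    rw [hR, derivative_egf, coeff_egf, Polynomial.coeff_smul, Polynomial.coeff_X_mul,
      hrec.coeff_clusterPoly n.succ_pos k.succ_pos, hrec.2 _ _ n.succ_pos k.succ_pos,
      Polynomial.finsetSum_coeff, Finset.smul_sum]
    refine Finset.sum_congr rfl fun δ _ => ?_
    rw [coeff_subtreeSeries_pow, coeff_egf, smul_assoc, Polynomial.coeff_smul,
      smul_eq_mul (Polynomial.C _), Polynomial.coeff_C_mul, Polynomial.finsetSum_coeff,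
      ← Finset.sum_attach (Finset.range (δ + 1)), Finset.mul_sum, Finset.smul_sum,
      Finset.smul_sum]
    refine Finset.sum_congr rfl fun s _ => ?_
    rw [hR, hB, Polynomial.coeff_smul, hrec.coeff_coeff_egf_pow_mul_egf_pow
      (Nat.lt_succ_iff.mp (Finset.mem_range.mp s.2))]
    simp only [Nat.succ_sub_one, Finset.mul_sum, smul_eq_mul, Finset.prod_inv_distrib]
    refine Finset.sum_congr rfl fun f _ => Finset.sum_congr rfl fun g _ => ?_
    field_simp

end ClusterSeries

section RandomRecursiveTree

theorem derivative_map {R S : Type*} [CommRing R] [CommRing S] (ψ : R →+* S) (F : R⟦X⟧) :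
    d⁄dX S (PowerSeries.map ψ F) = PowerSeries.map ψ (d⁄dX R F) := by
  ext n
  simp [PowerSeries.coeff_derivative]

theorem derivative_derivative_of_eq_C_mul_exp_subst {R : Type*} [CommRing R] [Algebra ℚ R] {c : R}
    {F S : R⟦X⟧} (hS : PowerSeries.constantCoeff S = 0)
    (hF : d⁄dX R F = PowerSeries.C c * (PowerSeries.exp R).subst S) :
    d⁄dX R (d⁄dX R F) = d⁄dX R S * d⁄dX R F := by
  rw [hF, Derivation.leibniz, PowerSeries.derivative_C, smul_zero, add_zero, smul_eq_mul,
    PowerSeries.derivative_subst (PowerSeries.HasSubst.of_constantCoeff_zero' hS),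
    PowerSeries.derivative_exp]
  ring

variable {p : ℝ} {r : ℕ → ℕ → ℝ} {b : ℕ → ℝ} {A : Type*} [CommRing A] [Algebra ℝ A]

theorem clusterRec.derivative_clusterSeries_X_eq_exp (hrec : clusterRec p (fun _ => 1) r b) :
    d⁄dX ℝ[X] (clusterSeries r Polynomial.X) =
      PowerSeries.C Polynomial.X *
        (PowerSeries.exp ℝ[X]).subst (subtreeSeries p r (Polynomial.X : ℝ[X])) := by
  have hexp : PowerSeries.exp ℝ[X] = egf ℝ fun _ => Polynomial.C 1 := by
    ext1 n
    rw [PowerSeries.coeff_exp, coeff_egf, map_one, ← Algebra.algebraMap_eq_smul_one,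
      IsScalarTower.algebraMap_apply ℚ ℝ ℝ[X]]
    simp
  rw [hexp, hrec.derivative_clusterSeries_X]

theorem clusterRec.constantCoeff_derivative_clusterSeries
    (hrec : clusterRec p (fun _ => 1) r b) (a : A) :
    PowerSeries.constantCoeff (d⁄dX A (clusterSeries r a)) = a := by
  have hX : PowerSeries.constantCoeff (d⁄dX ℝ[X] (clusterSeries r Polynomial.X)) =
      (Polynomial.X : ℝ[X]) := by
    rw [hrec.derivative_clusterSeries_X_eq_exp, map_mul,
      ← PowerSeries.coeff_zero_eq_constantCoeff_apply (PowerSeries.subst _ _),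
      coeff_subst_eq_sum_range _ (constantCoeff_subtreeSeries _)]
    simp
  have ha := map_aeval_clusterSeries r a Polynomial.X
  rw [Polynomial.aeval_X] at ha
  rw [← ha, derivative_map, ← PowerSeries.coeff_zero_eq_constantCoeff_apply, PowerSeries.coeff_map,
    PowerSeries.coeff_zero_eq_constantCoeff_apply, hX]
  exact Polynomial.aeval_X a

theorem clusterRec.derivative_derivative_clusterSeries
    (hrec : clusterRec p (fun _ => 1) r b) (a : A) :
    d⁄dX A (d⁄dX A (clusterSeries r a)) =
      (PowerSeries.C (algebraMap ℝ A p) * d⁄dX A (clusterSeries r a) +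
        PowerSeries.C (algebraMap ℝ A (1 - p)) * d⁄dX A (clusterSeries r 1)) *
          d⁄dX A (clusterSeries r a) := by
  have hX := derivative_derivative_of_eq_C_mul_exp_subst (constantCoeff_subtreeSeries _)
    hrec.derivative_clusterSeries_X_eq_exp
  have ha := congrArg (PowerSeries.map (Polynomial.aeval (R := ℝ) a : ℝ[X] →+* A)) hX
  simp only [subtreeSeries, map_mul, map_add, Derivation.leibniz, PowerSeries.derivative_C,
    smul_eq_mul, ← derivative_map, PowerSeries.map_C,
    map_aeval_clusterSeries, Polynomial.aeval_X, map_one] at ha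
  simpa using ha

variable [BinomialRing A]

theorem clusterRec.derivative_clusterSeries_one (hrec : clusterRec p (fun _ => 1) r b) :
    d⁄dX A (clusterSeries r 1) = invOneSubRpow 1 := by
  have hode : d⁄dX A (d⁄dX A (clusterSeries r 1)) =
      (PowerSeries.C 1 * d⁄dX A (clusterSeries r 1) + PowerSeries.C (1 - 1) * invOneSubRpow 1) *
        d⁄dX A (clusterSeries r 1) := by
    rw [hrec.derivative_derivative_clusterSeries, ← add_mul, ← map_add, ← map_add]
    simp
  simpa using bernoulli_mul_one_sub_eq (x := 0) hode
    (by simp [hrec.constantCoeff_derivative_clusterSeries])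

theorem clusterRec.eq_factorial (hrec : clusterRec p (fun _ => 1) r b) (n : ℕ) :
    b (n + 1) = n.factorial := by
  have h := congrArg (PowerSeries.coeff n) (hrec.derivative_clusterSeries_one (A := ℝ))
  rw [hrec.clusterSeries_one, derivative_egf, coeff_egf, coeff_invOneSubRpow,
    Ring.multichoose_one] at h
  exact (inv_mul_eq_one₀ (Nat.cast_ne_zero.mpr n.factorial_ne_zero)).mp h |>.symm

theorem clusterRec.derivative_clusterSeries_mul_one_sub (hrec : clusterRec p (fun _ => 1) r b)
    {a x : A} (hax : a * (1 - x) = 1) :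
    d⁄dX A (clusterSeries r a) * (1 - PowerSeries.C x * invOneSubRpow (algebraMap ℝ A p)) =
      invOneSubRpow 1 := by
  refine bernoulli_mul_one_sub_eq ?_ (by rw [hrec.constantCoeff_derivative_clusterSeries, hax])
  rw [hrec.derivative_derivative_clusterSeries, hrec.derivative_clusterSeries_one, map_sub, map_one]

theorem clusterRec.sum_mul_multichoose (hrec : clusterRec p (fun _ => 1) r b) (n k : ℕ) :
    ∑ j ∈ Finset.Icc 1 (n + 1), r (n + 1) j * Ring.multichoose (j : ℝ) k =
      n.factorial * Ring.multichoose (p * k + 1) n := by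
  have hT := hrec.derivative_clusterSeries_mul_one_sub
    (invOneSubRpow_one_mul_one_sub_X (R := ℝ))
  have hp : invOneSubRpow (algebraMap ℝ ℝ⟦X⟧ p) = PowerSeries.map PowerSeries.C (invOneSubRpow p) :=
    (map_invOneSubRpow PowerSeries.C p).symm
  have hone : invOneSubRpow (1 : ℝ⟦X⟧) = PowerSeries.map PowerSeries.C (invOneSubRpow 1) := by
    rw [map_invOneSubRpow, map_one]
  rw [hp, hone] at hT
  have hcoeff := coeff_coeff_of_mul_one_sub_C_X_mul hT k n
  rw [clusterSeries, derivative_egf, coeff_egf, invOneSubRpow_pow, ← invOneSubRpow_add,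
    coeff_invOneSubRpow, PowerSeries.coeff_smul, clusterPoly] at hcoeff
  simp only [map_sum, Polynomial.aeval_monomial, invOneSubRpow_pow, mul_one, ← Algebra.smul_def,
    PowerSeries.coeff_smul, coeff_invOneSubRpow, smul_eq_mul] at hcoeff
  rw [mul_comm p, add_comm (k * p : ℝ), ← hcoeff,
    mul_inv_cancel_left₀ (Nat.cast_ne_zero.mpr n.factorial_ne_zero)]

end RandomRecursiveTree

section Moments

theorem multichoose_eq_prod_div {K : Type*} [Field K] [CharZero K] [BinomialRing K] (s : K)
    (n : ℕ) :
    Ring.multichoose s n = (∏ j ∈ Finset.range n, (s + j)) / n.factorial := by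
  have hprod : (ascPochhammer K n).eval s = ∏ j ∈ Finset.range n, (s + j) := by
    induction n with
    | zero => simp
    | succ n ih => rw [ascPochhammer_succ_eval, ih, Finset.prod_range_succ]
  rw [eq_div_iff (Nat.cast_ne_zero.mpr n.factorial_ne_zero), mul_comm, ← nsmul_eq_mul,
    Ring.factorial_nsmul_multichoose_eq_ascPochhammer, Polynomial.ascPochhammer_smeval_eq_eval,
    hprod]

theorem tendsto_multichoose_div_rpow {s : ℝ} (hs : ∀ m : ℕ, s ≠ -m) :
    Tendsto (fun n : ℕ => Ring.multichoose s n / (n : ℝ) ^ (s - 1)) atTop (𝓝 (Real.Gamma s)⁻¹) := by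
  have hlim := (tendsto_natCast_div_add_atTop s).mul
    ((Real.GammaSeq_tendsto_Gamma s).inv₀ (Real.Gamma_ne_zero hs))
  rw [one_mul] at hlim
  refine hlim.congr' ?_
  filter_upwards [eventually_ne_atTop 0] with n hn
  have hn : (n : ℝ) ≠ 0 := Nat.cast_ne_zero.mpr hn
  have hsn : s + n ≠ 0 := fun h => hs n (eq_neg_of_add_eq_zero_left h)
  rw [Real.GammaSeq, multichoose_eq_prod_div, Finset.prod_range_succ, Real.rpow_sub_one hn,
    add_comm (n : ℝ)]
  field_simp

theorem tendsto_apply_X_pow_div_pow {𝕜 ι : Type*} [Field 𝕜] [LinearOrder 𝕜] [IsStrictOrderedRing 𝕜]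
    [TopologicalSpace 𝕜] [OrderTopology 𝕜] {l : Filter ι} {L : ι → 𝕜[X] →ₗ[𝕜] 𝕜} {a : ι → 𝕜}
    (ha : Tendsto a l atTop) {q : ℕ → 𝕜[X]} (hmonic : ∀ k, (q k).Monic)
    (hdeg : ∀ k, (q k).natDegree = k) {m : ℕ → 𝕜}
    (hq : ∀ k, Tendsto (fun i => L i (q k) / a i ^ k) l (𝓝 (m k))) (k : ℕ) :
    Tendsto (fun i => L i (Polynomial.X ^ k) / a i ^ k) l (𝓝 (m k)) := by
  induction k using Nat.strong_induction_on with
  | _ k ih =>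
  have hlower (j : ℕ) (hj : j < k) :
      Tendsto (fun i => L i (Polynomial.X ^ j) / a i ^ k) l (𝓝 0) := by
    have hmul := (ih j hj).mul ((tendsto_pow_div_pow_atTop_zero hj).comp ha)
    rw [mul_zero] at hmul
    refine hmul.congr' ?_
    filter_upwards [ha.eventually_ne_atTop 0] with i hi
    exact div_mul_div_cancel₀ (pow_ne_zero j hi)
  have hsum : Tendsto (fun i => ∑ j ∈ Finset.range k,
      (q k).coeff j * (L i (Polynomial.X ^ j) / a i ^ k)) l (𝓝 0) := by
    simpa using tendsto_finsetSum (Finset.range k) fun j hj =>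
      (hlower j (Finset.mem_range.mp hj)).const_mul ((q k).coeff j)
  have hsplit (i : ι) : L i (q k) = L i (Polynomial.X ^ k) +
      ∑ j ∈ Finset.range k, (q k).coeff j * L i (Polynomial.X ^ j) := by
    conv_lhs => rw [(hmonic k).as_sum, hdeg k]
    simp only [map_add, map_sum, ← Polynomial.smul_eq_C_mul, map_smul, smul_eq_mul]
  have hdiff := (hq k).sub hsum
  rw [sub_zero] at hdiff
  refine hdiff.congr fun i => ?_
  rw [hsplit, add_div, Finset.sum_div]
  simp only [mul_div_assoc, add_sub_cancel_right]

/-- The expectation `f ↦ E[f(size)]` of a polynomial in the size of the root cluster of the random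
tree with `n` vertices, as a linear functional. -/
noncomputable def rootClusterMean (r : ℕ → ℕ → ℝ) (b : ℕ → ℝ) (n : ℕ) : ℝ[X] →ₗ[ℝ] ℝ :=
  (b n)⁻¹ • ∑ j ∈ Finset.Icc 1 n, r n j • Polynomial.leval (j : ℝ)

theorem rootClusterMean_apply (r : ℕ → ℕ → ℝ) (b : ℕ → ℝ) (n : ℕ) (f : ℝ[X]) :
    rootClusterMean r b n f = (∑ j ∈ Finset.Icc 1 n, f.eval (j : ℝ) * r n j) / b n := by
  simp [rootClusterMean, div_eq_inv_mul, mul_comm]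

variable {p : ℝ} {r : ℕ → ℕ → ℝ} {b : ℕ → ℝ}

theorem clusterRec.rootClusterMean_ascPochhammer (hrec : clusterRec p (fun _ => 1) r b) (n k : ℕ) :
    rootClusterMean r b (n + 1) (ascPochhammer ℝ k) =
      k.factorial * Ring.multichoose (p * k + 1) n := by
  have heval (x : ℝ) : (ascPochhammer ℝ k).eval x = k.factorial * Ring.multichoose x k := by
    rw [← Polynomial.ascPochhammer_smeval_eq_eval,
      ← Ring.factorial_nsmul_multichoose_eq_ascPochhammer, nsmul_eq_mul]
  have hn : (n.factorial : ℝ) ≠ 0 := Nat.cast_ne_zero.mpr n.factorial_ne_zero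
  simp only [rootClusterMean_apply, heval, mul_assoc, ← Finset.mul_sum]
  simp only [mul_comm (Ring.multichoose _ _), hrec.sum_mul_multichoose, hrec.eq_factorial]
  field_simp

theorem clusterRec.tendsto_rootClusterMean_ascPochhammer (hrec : clusterRec p (fun _ => 1) r b)
    (hp : 0 < p) (k : ℕ) :
    Tendsto (fun n : ℕ => rootClusterMean r b n (ascPochhammer ℝ k) / ((n : ℝ) ^ p) ^ k) atTop
      (𝓝 (k.factorial / Real.Gamma (p * k + 1))) := by
  rw [← tendsto_add_atTop_iff_nat 1, div_eq_mul_inv]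
  have hshift : Tendsto (fun n : ℕ => ((n : ℝ) / (n + 1)) ^ (p * k)) atTop (𝓝 1) := by
    simpa using (tendsto_natCast_div_add_atTop (1 : ℝ)).rpow_const (Or.inl one_ne_zero)
  have hs (m : ℕ) : p * k + 1 ≠ -m := by
    have : 0 ≤ p * k := by positivity
    have : (0 : ℝ) ≤ m := m.cast_nonneg
    linarith
  have hlim := ((tendsto_multichoose_div_rpow hs).mul hshift).const_mul (k.factorial : ℝ)
  rw [mul_one, add_sub_cancel_right] at hlim
  refine hlim.congr' ?_
  filter_upwards [eventually_gt_atTop 0] with n hn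
  have hn0 : (0 : ℝ) < n := Nat.cast_pos.mpr hn
  have hpow : (n : ℝ) ^ (p * k) ≠ 0 := (Real.rpow_pos_of_pos hn0 _).ne'
  rw [hrec.rootClusterMean_ascPochhammer, Real.div_rpow hn0.le (by positivity),
    div_mul_div_cancel₀ hpow, mul_div_assoc, ← Real.rpow_mul_natCast (by positivity), Nat.cast_succ]

end Moments

theorem stmt2_general {p : ℝ} (hp : 0 < p) {r : ℕ → ℕ → ℝ} {b : ℕ → ℝ}
    (hrec : clusterRec p (fun _ => 1) r b) (k : ℕ) :
    Tendsto (fun n : ℕ =>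
        ((∑ j ∈ Finset.Icc 1 n, (j : ℝ) ^ k * r n j) / b n) / (n : ℝ) ^ (p * (k : ℝ)))
      atTop (𝓝 ((k.factorial : ℝ) / Real.Gamma (p * (k : ℝ) + 1))) := by
  have hscale : Tendsto (fun n : ℕ => (n : ℝ) ^ p) atTop atTop :=
    (tendsto_rpow_atTop hp).comp tendsto_natCast_atTop_atTop
  refine (tendsto_apply_X_pow_div_pow hscale
    (fun k => monic_ascPochhammer ℝ k) (fun k => ascPochhammer_natDegree ℝ k)
    (hrec.tendsto_rootClusterMean_ascPochhammer hp) k).congr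
    fun n => ?_
  simp only [rootClusterMean_apply, Polynomial.eval_pow, Polynomial.eval_X,
    Real.rpow_mul_natCast n.cast_nonneg]

/-- for random recursive trees (`φ(δ) = 1`), the `k`-th moment of the
root-cluster size, normalized by `n^{pk}`, converges to `k!/Γ(pk+1)` (the `k`-th
moment of the Mittag-Leffler distribution with parameter `p`). -/
theorem stmt2 (p : ℝ) (hp0 : 0 < p) (hp1 : p < 1)
    (r : ℕ → ℕ → ℝ) (b : ℕ → ℝ)
    (hrec : clusterRec p (fun _ => 1) r b)
    (k : ℕ) (hk : 1 ≤ k) :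
    Tendsto (fun n : ℕ =>
        ((∑ j ∈ Finset.Icc 1 n, (j : ℝ) ^ k * r n j) / b n) / (n : ℝ) ^ (p * (k : ℝ)))
      atTop (nhds ((k.factorial : ℝ) / Real.Gamma (p * (k : ℝ) + 1))) :=
  stmt2_general hp0 hrec k
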